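/- Let n, m be natural numbers with m ≥ 1, and let X be a complex Banach space such that the density of the dual space X* equipped with the weak-star topology is strictly greater than ℶ_{n+m−1}. Then every family of at most ℶ_n continuous homogeneous polynomials on X, each of degree between 1 and m, has a common zero subspace of density at least ℶ_n⁺; moreover, if m ≥ 2, the common zero subspace can be taken of density at least ℶ_{n+1}⁺. -/

import Mathlib

noncomputable section

universe u

/-- The density character of a topological space: the smallest cardinality of a dense
subset. -/
def densityChar (α : Type u) [TopologicalSpace α] : Cardinal.{u} :=
  sInf {c : Cardinal.{u} | ∃ s : Set α, Dense s ∧ Cardinal.mk s = c}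

/-!
If at most `κ` functionals, `κ` infinite, separated the points of `X`, then by Hahn–Banach their
span would be weak-star dense and `X*` would have weak-star density at most `κ`. So if
that density exceeds `κ`, any `κ` functionals have a nonzero common zero. Their common kernel even
has density greater than `κ`: otherwise, adding to them the norming functionals of `κ` vectors dense
in the kernel would leave no nonzero common zero.

Suppose any `2 ^ κ` polynomials of degree at most `m` have a nonzero common zero, and let `κ` forms
of degree at most `m + 1` be given. By transfinite recursion choose `(2 ^ κ)⁺` unit vectors, each
annihilated by the norming functionals of the earlier ones and by all polynomials obtained from the
forms by inserting earlier vectors into some, but not all, arguments; these have degree at most `m`.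
Then all the forms are diagonal along the sequence. There are at most `2 ^ κ` assignments of
diagonal values, so `(2 ^ κ)⁺` of the vectors share the same values. Grouping those into blocks of
`n = m + 2` and weighting each block by the powers of a primitive `n`-th root of unity makes every
diagonal value cancel, since `1 + ω ^ d + ⋯ + ω ^ (d (n - 1)) = 0` for `0 < d < n`. The block sums
are `1`-separated thanks to the norming functionals, so their span is a common zero subspace of
density at least `(2 ^ κ)⁺`. Iterating this step raises the degree by one at the cost of one
exponential.
-/

open Cardinal Set

section Density

theorem densityChar_le_mk {α : Type u} [TopologicalSpace α] {s : Set α} (hs : Dense s) :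
    densityChar α ≤ #s :=
  csInf_le' ⟨s, hs, rfl⟩

theorem nontrivial_of_one_lt_densityChar {α : Type u} [TopologicalSpace α]
    (hα : 1 < densityChar α) : Nontrivial α := by
  rw [← one_lt_iff_nontrivial, ← mk_univ]
  exact hα.trans_le (densityChar_le_mk dense_univ)

theorem exists_dense_mk_eq_densityChar (α : Type u) [TopologicalSpace α] :
    ∃ s : Set α, Dense s ∧ #s = densityChar α :=
  csInf_mem (s := {c : Cardinal.{u} | ∃ s : Set α, Dense s ∧ #s = c}) ⟨_, univ, dense_univ, rfl⟩

theorem mk_le_densityChar_of_pairwise_le_dist {α T : Type u} [PseudoMetricSpace α] {ε : ℝ}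
    (hε : 0 < ε) {y : T → α} (hy : Pairwise fun s t ↦ ε ≤ dist (y s) (y t)) :
    #T ≤ densityChar α := by
  obtain ⟨D, hD, hcard⟩ := exists_dense_mk_eq_densityChar α
  choose z hzD hz using fun t ↦ hD.exists_dist_lt (y t) (half_pos hε)
  rw [← hcard]
  refine mk_le_of_injective (f := fun t ↦ (⟨z t, hzD t⟩ : D)) fun s t hst ↦ ?_
  by_contra hne
  have hst : z s = z t := congrArg Subtype.val hst
  have hyz : dist (y s) (y t) ≤ dist (y s) (z s) + dist (y t) (z t) :=
    hst ▸ dist_triangle_right _ _ _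
  linarith [hy hne, hz s, hz t]

theorem mk_addSubmonoidClosure_le {M : Type u} [AddMonoid M] (s : Set M) :
    #(AddSubmonoid.closure s) ≤ max ℵ₀ #s := by
  rw [AddSubmonoid.closure_eq_mrange]
  exact mk_range_le.trans (mk_list_le_max s)

theorem densityChar_le_of_dense_span {𝕜 : Type*} {E : Type u} [Semiring 𝕜] [TopologicalSpace 𝕜]
    [TopologicalSpace.SeparableSpace 𝕜] [AddCommMonoid E] [Module 𝕜 E] [TopologicalSpace E]
    [ContinuousAdd E] [ContinuousSMul 𝕜 E] {F : Set E}
    (hF : Dense (Submodule.span 𝕜 F : Set E)) : densityChar E ≤ max ℵ₀ #F := by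
  let q := TopologicalSpace.denseSeq 𝕜
  let G : Set E := range fun p : ℕ × F ↦ q p.1 • (p.2 : E)
  have hG : #G ≤ max ℵ₀ #F := calc
    #G ≤ #(ℕ × F) := mk_range_le
    _ = ℵ₀ * #F := by simp
    _ ≤ max ℵ₀ #F := (mul_le_max _ _).trans (by simp)
  have hspan : (Submodule.span 𝕜 F).toAddSubmonoid ≤
      (AddSubmonoid.closure G).topologicalClosure := by
    rw [Submodule.span_eq_closure, AddSubmonoid.closure_le]
    rintro _ ⟨c, -, v, hv, rfl⟩
    have hcv : c • v ∈ closure ((· • v) '' range q) :=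
      image_closure_subset_closure_image (by fun_prop)
        (mem_image_of_mem _ (TopologicalSpace.denseRange_denseSeq 𝕜 c))
    refine closure_mono ?_ hcv
    rintro _ ⟨_, ⟨n, rfl⟩, rfl⟩
    exact AddSubmonoid.subset_closure ⟨(n, ⟨v, hv⟩), rfl⟩
  have hdense : Dense (AddSubmonoid.closure G : Set E) :=
    dense_closure.1 (hF.mono hspan)
  exact (densityChar_le_mk hdense).trans
    ((mk_addSubmonoidClosure_le G).trans (max_le (le_max_left _ _) hG))

end Density

section WeakStar

variable {𝕜 : Type*} [RCLike 𝕜]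

theorem exists_strongDual_eq_zero_of_notMem_closure {E : Type*} [AddCommGroup E] [Module 𝕜 E]
    [Module ℝ E] [IsScalarTower ℝ 𝕜 E] [TopologicalSpace E] [IsTopologicalAddGroup E]
    [ContinuousSMul 𝕜 E] [LocallyConvexSpace ℝ E] {S : Submodule 𝕜 E} {v : E}
    (hv : v ∉ closure (S : Set E)) :
    ∃ f : StrongDual 𝕜 E, (∀ a ∈ S, f a = 0) ∧ f v ≠ 0 := by
  have := IsScalarTower.continuousSMul (M := ℝ) (α := E) 𝕜
  obtain ⟨f, u, hfS, hfv⟩ := RCLike.geometric_hahn_banach_closed_point (𝕜 := 𝕜)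
    (S.topologicalClosure.restrictScalars ℝ).convex S.isClosed_topologicalClosure hv
  have hu : 0 < u := by simpa using hfS 0 (zero_mem _)
  refine ⟨f, fun a ha ↦ ?_, fun hfv0 ↦ ?_⟩
  · -- Otherwise `re ∘ f` would take the value `u` at a multiple of `a`.
    by_contra hne
    have := hfS (((u : 𝕜) / f a) • a) (S.le_topologicalClosure (S.smul_mem _ ha))
    simp [hne] at this
  · simp only [hfv0, map_zero] at hfv
    exact hu.not_gt hfv

theorem dense_span_of_forall_eq_zero {X : Type*} [AddCommGroup X] [Module 𝕜 X]
    [TopologicalSpace X] {F : Set (WeakDual 𝕜 X)} (hF : ∀ x : X, (∀ f ∈ F, f x = 0) → x = 0) :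
    Dense (Submodule.span 𝕜 F : Set (WeakDual 𝕜 X)) := by
  intro φ
  by_contra hφ
  have : LocallyConvexSpace ℝ (WeakDual 𝕜 X) :=
    inferInstanceAs (LocallyConvexSpace ℝ (WeakBilin (topDualPairing 𝕜 X)))
  have : IsScalarTower ℝ 𝕜 (WeakDual 𝕜 X) :=
    inferInstanceAs (IsScalarTower ℝ 𝕜 (X →L[𝕜] 𝕜))
  obtain ⟨Φ, hΦF, hΦφ⟩ := exists_strongDual_eq_zero_of_notMem_closure hφ
  obtain ⟨x, hx⟩ := LinearMap.dualEmbedding_surjective (topDualPairing 𝕜 X) Φ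
  have hΦ (f : WeakDual 𝕜 X) : Φ f = f x := (DFunLike.congr_fun hx f).symm
  have hx0 : x = 0 := hF x fun f hf ↦ by rw [← hΦ, hΦF f (Submodule.subset_span hf)]
  exact hΦφ (by rw [hΦ, hx0, map_zero])

theorem exists_ne_zero_forall_apply_eq_zero_of_lt_densityChar {X : Type u} [AddCommGroup X]
    [Module 𝕜 X] [TopologicalSpace X] {F : Set (WeakDual 𝕜 X)}
    (hF : max ℵ₀ #F < densityChar (WeakDual 𝕜 X)) : ∃ x : X, x ≠ 0 ∧ ∀ f ∈ F, f x = 0 := by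
  by_contra! hcon
  refine hF.not_ge (densityChar_le_of_dense_span (𝕜 := 𝕜) (dense_span_of_forall_eq_zero ?_))
  intro x hx
  by_contra hne
  obtain ⟨f, hf, hfx⟩ := hcon x hne
  exact hfx (hx f hf)

end WeakStar

section HomogeneousPolynomials

variable {𝕜 : Type} [NontriviallyNormedField 𝕜] {X : Type u} [NormedAddCommGroup X]
  [NormedSpace 𝕜 X]

variable (𝕜 X) in
/-- The continuous homogeneous polynomials on `X` of degree between `1` and `m`, as functions. The
defining multilinear form is not required to be symmetric; over `ℂ`, symmetrizing it does not change
the polynomial. -/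
def homogeneousPolynomials (m : ℕ) : Set (X → 𝕜) :=
  {P | ∃ d, 1 ≤ d ∧ d ≤ m ∧ ∃ A : X [×d]→L[𝕜] 𝕜, P = fun x ↦ A fun _ ↦ x}

theorem diagonal_mem_homogeneousPolynomials {J : Type*} [Fintype J] [Nonempty J] {m : ℕ}
    (hJ : Fintype.card J ≤ m) (A : ContinuousMultilinearMap 𝕜 (fun _ : J ↦ X) 𝕜) :
    (fun x ↦ A fun _ ↦ x) ∈ homogeneousPolynomials 𝕜 X m :=
  ⟨Fintype.card J, Fintype.card_pos, hJ, A.domDomCongr (Fintype.equivFin J), rfl⟩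

theorem strongDual_mem_homogeneousPolynomials {m : ℕ} (hm : 1 ≤ m) (f : StrongDual 𝕜 X) :
    ⇑f ∈ homogeneousPolynomials 𝕜 X m :=
  diagonal_mem_homogeneousPolynomials (J := Unit) (by simpa using hm)
    (ContinuousMultilinearMap.ofSubsingleton 𝕜 X 𝕜 () f)

theorem exists_strongDual_of_mem_homogeneousPolynomials_one {P : X → 𝕜}
    (hP : P ∈ homogeneousPolynomials 𝕜 X 1) : ∃ f : StrongDual 𝕜 X, P = f := by
  obtain ⟨d, hd₁, hd, A, rfl⟩ := hP
  obtain rfl : d = 1 := le_antisymm hd hd₁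
  exact ⟨(ContinuousMultilinearMap.ofSubsingleton 𝕜 X 𝕜 0).symm A, rfl⟩

theorem apply_smul_eq_zero_of_mem_homogeneousPolynomials {m : ℕ} {P : X → 𝕜}
    (hP : P ∈ homogeneousPolynomials 𝕜 X m) (c : 𝕜) {x : X} (hx : P x = 0) : P (c • x) = 0 := by
  obtain ⟨d, -, -, A, rfl⟩ := hP
  calc A (fun _ ↦ c • x)
      = (∏ _ : Fin d, c) • A fun _ ↦ x := A.map_smul_univ (fun _ ↦ c) fun _ ↦ x
    _ = 0 := (congrArg _ hx).trans (smul_zero _)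

variable (𝕜 X) in
/-- Any `κ` or fewer continuous homogeneous polynomials on `X` of degree between `1` and `m` have a
common zero other than the origin. -/
def HasCommonZeros (κ : Cardinal.{u}) (m : ℕ) : Prop :=
  ∀ F ⊆ homogeneousPolynomials 𝕜 X m, #F ≤ κ → ∃ x : X, x ≠ 0 ∧ ∀ P ∈ F, P x = 0

end HomogeneousPolynomials

section LinearCase

variable {𝕜 : Type} [RCLike 𝕜] {X : Type u} [NormedAddCommGroup X] [NormedSpace 𝕜 X]

theorem HasCommonZeros.exists_norm_eq_one {κ : Cardinal.{u}} {m : ℕ}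
    (hZ : HasCommonZeros 𝕜 X κ m) {F : Set (X → 𝕜)} (hF : F ⊆ homogeneousPolynomials 𝕜 X m)
    (hFκ : #F ≤ κ) : ∃ x : X, ‖x‖ = 1 ∧ ∀ P ∈ F, P x = 0 := by
  obtain ⟨x, hx, hPx⟩ := hZ F hF hFκ
  exact ⟨(‖x‖⁻¹ : 𝕜) • x, norm_smul_inv_norm hx,
    fun P hP ↦ apply_smul_eq_zero_of_mem_homogeneousPolynomials (hF hP) _ (hPx P hP)⟩

theorem hasCommonZeros_one {κ : Cardinal.{u}} (hκ : ℵ₀ ≤ κ)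
    (hX : κ < densityChar (WeakDual 𝕜 X)) : HasCommonZeros 𝕜 X κ 1 := by
  intro F hF hFκ
  choose f hf using fun P : F ↦ exists_strongDual_of_mem_homogeneousPolynomials_one (hF P.2)
  obtain ⟨x, hx, hfx⟩ := exists_ne_zero_forall_apply_eq_zero_of_lt_densityChar
    (F := range fun P ↦ (f P).toWeakDual)
    ((max_le hκ (mk_range_le.trans hFκ)).trans_lt hX)
  exact ⟨x, hx, fun P hP ↦
    (congrFun (hf ⟨P, hP⟩) x).trans (hfx _ (mem_range_self (⟨P, hP⟩ : F)))⟩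

theorem eq_zero_of_forall_norming_eq_zero {g : X → StrongDual 𝕜 X} (hg : ∀ y, ‖g y‖ ≤ 1)
    (hgy : ∀ y, g y y = ‖y‖) {D : Set X} {x : X} (hx : x ∈ closure D)
    (hgx : ∀ y ∈ D, g y x = 0) : x = 0 := by
  by_contra hne
  obtain ⟨y, hyD, hy⟩ := Metric.mem_closure_iff.1 hx (‖x‖ / 2) (by positivity)
  have hy_le : ‖y‖ ≤ ‖y - x‖ := calc
    ‖y‖ = ‖g y (y - x)‖ := by simp [map_sub, hgx y hyD, hgy]
    _ ≤ ‖y - x‖ := (g y).le_of_opNorm_le (hg y) _ |>.trans_eq (one_mul _)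
  rw [dist_eq_norm, norm_sub_rev] at hy
  linarith [norm_le_norm_add_norm_sub y x]

theorem HasCommonZeros.exists_submodule_of_subset_one {κ : Cardinal.{u}}
    (hκ : ℵ₀ ≤ κ) (hZ : HasCommonZeros 𝕜 X κ 1) {F : Set (X → 𝕜)}
    (hF : F ⊆ homogeneousPolynomials 𝕜 X 1) (hFκ : #F ≤ κ) :
    ∃ Y : Submodule 𝕜 X, (∀ P ∈ F, ∀ y ∈ Y, P y = 0) ∧ κ < densityChar Y := by
  choose f hf using fun P : F ↦ exists_strongDual_of_mem_homogeneousPolynomials_one (hF P.2)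
  let Y : Submodule 𝕜 X := ⨅ P, (f P).ker
  have hY (x : X) : x ∈ Y ↔ ∀ P ∈ F, P x = 0 := by
    simp only [Y, Submodule.mem_iInf, LinearMap.mem_ker, Subtype.forall]
    exact forall₂_congr fun P hP ↦ Eq.congr_left (congrFun (hf ⟨P, hP⟩) x).symm
  refine ⟨Y, fun P hP y hy ↦ (hY y).1 hy P hP, ?_⟩
  by_contra! hYκ
  obtain ⟨D, hD, hDcard⟩ := exists_dense_mk_eq_densityChar Y
  choose g hg hgy using exists_dual_vector'' 𝕜 (E := X)
  let G : Set (X → 𝕜) := range fun y : D ↦ ⇑(g y)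
  have hG : G ⊆ homogeneousPolynomials 𝕜 X 1 :=
    range_subset_iff.2 fun y ↦ strongDual_mem_homogeneousPolynomials le_rfl _
  have hFGκ : #↑(F ∪ G) ≤ κ := (mk_union_le F G).trans
    (add_le_of_le hκ hFκ (mk_range_le.trans (hDcard.trans_le hYκ)))
  obtain ⟨x, hx, hPx⟩ := hZ (F ∪ G) (union_subset hF hG) hFGκ
  have hxY : x ∈ Y := (hY x).2 fun P hP ↦ hPx P (.inl hP)
  have hxD : x ∈ closure (Subtype.val '' D) :=
    image_closure_subset_closure_image continuous_subtype_val
      (mem_image_of_mem Subtype.val (hD ⟨x, hxY⟩))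
  refine hx (eq_zero_of_forall_norming_eq_zero hg hgy hxD ?_)
  rintro _ ⟨y, hy, rfl⟩
  exact hPx _ (.inr ⟨⟨y, hy⟩, rfl⟩)

end LinearCase

section TransfiniteSequence

theorem exists_transfinite_seq {α : Type u} {ν : Cardinal.{u}} {R : Set α → α → Prop}
    (hR : ∀ L : Set α, #L ≤ ν → ∃ x, R L x) :
    ∃ x : (Order.succ ν).ord.ToType → α, ∀ i, R (x '' Iio i) (x i) := by
  have : Nonempty α := (hR ∅ (by simp)).nonempty
  choose! next hnext using hR
  let x := (wellFounded_lt (α := (Order.succ ν).ord.ToType)).fix fun i ih ↦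
    next (range fun j : Iio i ↦ ih j j.2)
  have hx (i) : x i = next (x '' Iio i) := by
    rw [image_eq_range]
    exact WellFounded.fix_eq _ _ i
  refine ⟨x, fun i ↦ hx i ▸ hnext _ (mk_image_le.trans ?_)⟩
  rw [← Order.lt_succ_iff]
  simpa using mk_Iio_lt i

end TransfiniteSequence

section CoefficientBound

variable {𝕜 X Λ : Type*} [NontriviallyNormedField 𝕜] [NormedAddCommGroup X] [NormedSpace 𝕜 X]

variable (𝕜) in
/-- The norm of every nonempty linear combination of the family `x` is at least the modulus of one
of its coefficients. It makes combinations of disjoint blocks with unimodular coefficients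
`1`-separated, and unlike the triangular biorthogonal system from which it is obtained, it involves
no order on `Λ`, so that it survives reindexing. -/
def NormBoundsSomeCoeff (x : Λ → X) : Prop :=
  ∀ (s : Finset Λ), s.Nonempty → ∀ c : Λ → 𝕜, ∃ i ∈ s, ‖c i‖ ≤ ‖∑ j ∈ s, c j • x j‖

theorem NormBoundsSomeCoeff.comp_injective {T : Type*} {x : Λ → X}
    (hx : NormBoundsSomeCoeff 𝕜 x) {φ : T → Λ} (hφ : φ.Injective) :
    NormBoundsSomeCoeff 𝕜 (x ∘ φ) := by
  intro s hs c
  obtain ⟨_, hi, hci⟩ := hx (s.map ⟨φ, hφ⟩) (by simpa using hs) (Function.extend φ c 0)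
  obtain ⟨t, ht, rfl⟩ := Finset.mem_map.1 hi
  exact ⟨t, ht, by simpa [hφ.extend_apply] using hci⟩

theorem normBoundsSomeCoeff_of_triangular [LinearOrder Λ] {x : Λ → X} {f : Λ → StrongDual 𝕜 X}
    (hf : ∀ i, ‖f i‖ ≤ 1) (hdiag : ∀ i, f i (x i) = 1) (hupper : ∀ i j, i < j → f i (x j) = 0) :
    NormBoundsSomeCoeff 𝕜 x := by
  intro s hs c
  obtain ⟨i, hi, hmin⟩ := s.exists_min_image id hs
  have hfi : f i (∑ j ∈ s, c j • x j) = c i := by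
    rw [map_sum, Finset.sum_eq_single_of_mem i hi]
    · simp [hdiag]
    · intro j hj hne
      rw [map_smul, hupper i j ((hmin j hj).lt_of_ne' hne), smul_zero]
  refine ⟨i, hi, ?_⟩
  rw [← hfi]
  exact (f i).le_of_opNorm_le (hf i) _ |>.trans_eq (one_mul _)

end CoefficientBound

section Diagonal

variable {𝕜 X Λ : Type*} [NontriviallyNormedField 𝕜] [NormedAddCommGroup X] [NormedSpace 𝕜 X]
  {d : ℕ}

/-- The multilinear form `A` vanishes at all tuples of members of the family `x` whose indices are
not all equal, so that only the pure powers survive when the polynomial of `A` is expanded on the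
span of `x`. -/
def IsDiagonalAlong (A : X [×d]→L[𝕜] 𝕜) (x : Λ → X) : Prop :=
  ∀ α : Fin d → Λ, (∃ a b, α a ≠ α b) → A (x ∘ α) = 0

theorem IsDiagonalAlong.comp_injective {T : Type*} {A : X [×d]→L[𝕜] 𝕜} {x : Λ → X}
    (hA : IsDiagonalAlong A x) {φ : T → Λ} (hφ : φ.Injective) : IsDiagonalAlong A (x ∘ φ) :=
  fun α ⟨a, b, hab⟩ ↦ hA (φ ∘ α) ⟨a, b, hφ.ne hab⟩

theorem IsDiagonalAlong.apply_sum_smul {A : X [×d]→L[𝕜] 𝕜} {x : Λ → X}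
    (hA : IsDiagonalAlong A x) (hd : d ≠ 0) (s : Finset Λ) (c : Λ → 𝕜) :
    A (fun _ ↦ ∑ i ∈ s, c i • x i) = ∑ i ∈ s, c i ^ d * A fun _ ↦ x i := by
  classical
  have expand : A (fun _ ↦ ∑ i ∈ s, c i • x i) =
      ∑ α ∈ Fintype.piFinset fun _ : Fin d ↦ s, (∏ j, c (α j)) * A (x ∘ α) := by
    rw [A.map_sum_finset (fun _ i ↦ c i • x i) fun _ ↦ s]
    exact Finset.sum_congr rfl fun α _ ↦ A.map_smul_univ (fun j ↦ c (α j)) (x ∘ α)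
  have j₀ : Fin d := ⟨0, Nat.pos_of_ne_zero hd⟩
  rw [expand]
  symm
  refine Finset.sum_of_injOn (fun i _ ↦ i) (fun i _ j _ hij ↦ congrFun hij j₀) ?_ ?_ ?_
  · intro i hi
    simpa using fun _ ↦ hi
  · intro α hα hα_const
    obtain ⟨a, ha⟩ : ∃ a, α a ≠ α j₀ := by
      by_contra! hcon
      exact hα_const ⟨α j₀, Fintype.mem_piFinset.1 hα j₀, (funext hcon).symm⟩
    rw [hA α ⟨a, j₀, ha⟩, mul_zero]
  · intro i _
    simp [Function.comp_def]

end Diagonal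

section RootsOfUnity

variable {T : Type*} {n : ℕ}

/-- The combination of the `t`-th block of `x` weighted by the powers of `ω`. If `ω` is a primitive
`n`-th root of unity, forms of degree less than `n` that are diagonal along `x` and constant on the
members of `x` cancel on it. -/
def powerWeightedSum {R M : Type*} [Semiring R] [AddCommMonoid M] [Module R M] (ω : R)
    (x : T × Fin n → M) (t : T) : M :=
  ∑ r : Fin n, ω ^ (r : ℕ) • x (t, r)

theorem sum_smul_powerWeightedSum {R M : Type*} [Semiring R] [AddCommMonoid M] [Module R M]
    (ω : R) (x : T × Fin n → M) (s : Finset T) (a : T → R) :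
    ∑ t ∈ s, a t • powerWeightedSum ω x t =
      ∑ p ∈ s ×ˢ (Finset.univ : Finset (Fin n)), (a p.1 * ω ^ (p.2 : ℕ)) • x p := by
  simp only [powerWeightedSum, Finset.smul_sum, smul_smul, Finset.sum_product]

theorem sum_fin_pow_pow_eq_zero {K : Type*} [Field K] {ω : K} (hω : IsPrimitiveRoot ω n) {d : ℕ}
    (hd : d ≠ 0) (hdn : d < n) :
    ∑ r : Fin n, (ω ^ (r : ℕ)) ^ d = 0 := by
  simp only [pow_right_comm ω _ d]
  rw [Fin.sum_univ_eq_sum_range fun r ↦ (ω ^ d) ^ r,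
    geom_sum_eq (hω.pow_ne_one_of_pos_of_lt hd hdn), pow_right_comm, hω.pow_eq_one, one_pow,
    sub_self, zero_div]

variable {𝕜 X : Type*} [NontriviallyNormedField 𝕜] [NormedAddCommGroup X] [NormedSpace 𝕜 X] {ω : 𝕜}

theorem IsDiagonalAlong.apply_eq_zero_of_mem_span {d : ℕ} {A : X [×d]→L[𝕜] 𝕜}
    {x : T × Fin n → X} (hA : IsDiagonalAlong A x) (hω : IsPrimitiveRoot ω n) (hd : d ≠ 0)
    (hdn : d < n) {c : 𝕜} (hc : ∀ p, A (fun _ ↦ x p) = c) {v : X}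
    (hv : v ∈ Submodule.span 𝕜 (range (powerWeightedSum ω x))) : A (fun _ ↦ v) = 0 := by
  obtain ⟨a, rfl⟩ := Finsupp.mem_span_range_iff_exists_finsupp.1 hv
  calc A (fun _ ↦ a.sum fun t b ↦ b • powerWeightedSum ω x t)
      = ∑ p ∈ a.support ×ˢ (Finset.univ : Finset (Fin n)), (a p.1 * ω ^ (p.2 : ℕ)) ^ d * c := by
        simp only [Finsupp.sum, sum_smul_powerWeightedSum, hA.apply_sum_smul hd, hc]
    _ = ∑ t ∈ a.support, a t ^ d * (∑ r : Fin n, (ω ^ (r : ℕ)) ^ d) * c := by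
        simp only [Finset.sum_product, mul_pow, Finset.mul_sum, Finset.sum_mul]
    _ = 0 := by simp [sum_fin_pow_pow_eq_zero hω hd hdn]

theorem NormBoundsSomeCoeff.pairwise_one_le_dist {x : T × Fin n → X}
    (hx : NormBoundsSomeCoeff 𝕜 x) (hn : n ≠ 0) (hω : ‖ω‖ = 1) :
    Pairwise fun s t ↦ 1 ≤ dist (powerWeightedSum ω x s) (powerWeightedSum ω x t) := by
  classical
  intro s t hst
  let a : T → 𝕜 := fun u ↦ if u = s then 1 else -1
  have ha (u : T) : ‖a u‖ = 1 := by
    by_cases hu : u = s <;> simp [a, hu]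
  have hsub : powerWeightedSum ω x s - powerWeightedSum ω x t =
      ∑ u ∈ {s, t}, a u • powerWeightedSum ω x u := by
    rw [Finset.sum_pair hst]
    simp [a, hst.symm, sub_eq_add_neg]
  have : NeZero n := ⟨hn⟩
  obtain ⟨p, -, hp⟩ := hx ({s, t} ×ˢ Finset.univ) ⟨(s, 0), by simp⟩ fun p ↦ a p.1 * ω ^ (p.2 : ℕ)
  rw [dist_eq_norm, hsub, sum_smul_powerWeightedSum]
  simpa [ha, hω] using hp

end RootsOfUnity

section MixedPolynomials

variable {𝕜 : Type} [NontriviallyNormedField 𝕜] {X : Type u} [NormedAddCommGroup X]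
  [NormedSpace 𝕜 X] {d : ℕ}

/-- The polynomials `x ↦ A (…, x, …, ℓ, …)` obtained from the form `A` by fixing some, but not all,
of its arguments to be elements of `L`; the tuple `z` has `none` at the arguments left free. -/
def mixedPolynomials (A : X [×d]→L[𝕜] 𝕜) (L : Set X) : Set (X → 𝕜) :=
  {P | ∃ z : Fin d → Option L, (∃ j, z j = none) ∧ (∃ j, z j ≠ none) ∧
    P = fun x ↦ A fun j ↦ (z j).elim x (↑)}

theorem mk_mixedPolynomials_le {ν : Cardinal.{u}} (hν : ℵ₀ ≤ ν) (A : X [×d]→L[𝕜] 𝕜) {L : Set X}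
    (hL : #L ≤ ν) : #(mixedPolynomials A L) ≤ ν := by
  have hsub : mixedPolynomials A L ⊆
      range fun (z : Fin d → Option L) (x : X) ↦ A fun j ↦ (z j).elim x (↑) := by
    rintro _ ⟨z, -, -, rfl⟩
    exact mem_range_self z
  calc #(mixedPolynomials A L) ≤ #(Fin d → Option L) := (mk_le_mk_of_subset hsub).trans mk_range_le
    _ = (#L + 1) ^ d := by simp
    _ ≤ ν ^ d := by gcongr; exact add_le_of_le hν hL (one_le_aleph0.trans hν)
    _ ≤ ν := power_nat_le hν

theorem mixedPolynomials_subset_homogeneousPolynomials {m : ℕ} (hd : d ≤ m + 1)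
    (A : X [×d]→L[𝕜] 𝕜) (L : Set X) : mixedPolynomials A L ⊆ homogeneousPolynomials 𝕜 X m := by
  classical
  rintro _ ⟨z, ⟨j₀, hj₀⟩, ⟨j₁, hj₁⟩, rfl⟩
  have : Nonempty {j // z j = none} := ⟨⟨j₀, hj₀⟩⟩
  let B : ContinuousMultilinearMap 𝕜 (fun _ : {j // z j = none} ↦ X) 𝕜 :=
    { A.toMultilinearMap.domDomRestrict (fun j ↦ z j = none) fun j ↦ (z j).elim 0 (↑) with
      cont := A.cont.comp <| continuous_pi fun j ↦ by
        by_cases hj : z j = none <;> simp only [hj, dite_true, dite_false] <;> fun_prop }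
  have hB : (fun x ↦ A fun j ↦ (z j).elim x (↑)) = fun x ↦ B fun _ ↦ x := by
    funext x
    refine congrArg A (funext fun j ↦ ?_)
    cases hj : z j <;> simp [hj]
  rw [hB]
  refine diagonal_mem_homogeneousPolynomials ?_ B
  have hcard : Fintype.card {j // z j = none} < d := by
    simpa using Fintype.card_subtype_lt (p := fun j ↦ z j = none) hj₁
  lia

theorem isDiagonalAlong_of_forall_mixedPolynomials {Λ : Type*} [LinearOrder Λ]
    {A : X [×d]→L[𝕜] 𝕜} {x : Λ → X}
    (hx : ∀ i, ∀ P ∈ mixedPolynomials A (x '' Iio i), P (x i) = 0) : IsDiagonalAlong A x := by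
  classical
  rintro α ⟨a, b, hab⟩
  have : Nonempty (Fin d) := ⟨a⟩
  obtain ⟨j₀, hj₀⟩ := Finite.exists_max α
  obtain ⟨j₁, hj₁⟩ : ∃ j, α j ≠ α j₀ := by
    by_contra! hcon
    exact hab ((hcon a).trans (hcon b).symm)
  let z (j : Fin d) : Option (x '' Iio (α j₀)) :=
    if hj : α j = α j₀ then none else some ⟨x (α j), _, (hj₀ j).lt_of_ne hj, rfl⟩
  have hz : x ∘ α = fun j ↦ (z j).elim (x (α j₀)) (↑) := by
    funext j
    by_cases hj : α j = α j₀ <;> simp [z, hj]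
  rw [hz]
  exact hx (α j₀) _ ⟨z, ⟨j₀, by simp [z]⟩, ⟨j₁, by simp [z, hj₁]⟩, rfl⟩

end MixedPolynomials

theorem HasCommonZeros.exists_diagonal_family {𝕜 : Type} [RCLike 𝕜] {X : Type u}
    [NormedAddCommGroup X] [NormedSpace 𝕜 X] {ν : Cardinal.{u}} (hν : ℵ₀ ≤ ν) {m : ℕ}
    (hm : 1 ≤ m) (hZ : HasCommonZeros 𝕜 X ν m) {ι : Type u} (hι : #ι ≤ ν) {d : ι → ℕ}
    (hd : ∀ i, d i ≤ m + 1) (A : ∀ i, X [×d i]→L[𝕜] 𝕜) :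
    ∃ (Λ : Type u) (x : Λ → X), #Λ = Order.succ ν ∧ NormBoundsSomeCoeff 𝕜 x ∧
      ∀ i, IsDiagonalAlong (A i) x := by
  choose g hg hgy using exists_dual_vector'' 𝕜 (E := X)
  have hnext (L : Set X) (hL : #L ≤ ν) : ∃ x, ‖x‖ = 1 ∧ (∀ y ∈ L, g y x = 0) ∧
      ∀ i, ∀ P ∈ mixedPolynomials (A i) L, P x = 0 := by
    let F : Set (X → 𝕜) := (fun y ↦ ⇑(g y)) '' L
    let G : Set (X → 𝕜) := ⋃ i, mixedPolynomials (A i) L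
    have hF : F ⊆ homogeneousPolynomials 𝕜 X m :=
      image_subset_iff.2 fun y _ ↦ strongDual_mem_homogeneousPolynomials hm _
    have hG : G ⊆ homogeneousPolynomials 𝕜 X m :=
      iUnion_subset fun i ↦ mixedPolynomials_subset_homogeneousPolynomials (hd i) _ _
    have hGν : #G ≤ ν := (mk_iUnion_le _).trans <|
      (mul_le_mul' hι (ciSup_le' fun i ↦ mk_mixedPolynomials_le hν (A i) hL)).trans
        (mul_eq_self hν).le
    obtain ⟨x, hx, hPx⟩ := hZ.exists_norm_eq_one (union_subset hF hG)
      ((mk_union_le F G).trans (add_le_of_le hν (mk_image_le.trans hL) hGν))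
    exact ⟨x, hx, fun y hy ↦ hPx _ (.inl (mem_image_of_mem _ hy)),
      fun i P hP ↦ hPx P (.inr (mem_iUnion.2 ⟨i, hP⟩))⟩
  obtain ⟨x, hx⟩ := exists_transfinite_seq hnext
  refine ⟨_, x, by simp, normBoundsSomeCoeff_of_triangular (f := fun i ↦ g (x i))
    (fun i ↦ hg _) (fun i ↦ ?_) (fun i j hij ↦ (hx j).2.1 _ (mem_image_of_mem x hij)),
    fun i ↦ isDiagonalAlong_of_forall_mixedPolynomials fun j ↦ (hx j).2.2 i⟩
  rw [hgy, (hx i).1, RCLike.ofReal_one]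

section Pigeonhole

theorem exists_injective_prod_fin_const {ν : Cardinal.{u}} (hν : ℵ₀ ≤ ν) {Λ C : Type u}
    (hΛ : #Λ = Order.succ ν) (hC : #C ≤ ν) (g : Λ → C) {n : ℕ} (hn : n ≠ 0) :
    ∃ (c : C) (φ : Λ × Fin n → Λ), φ.Injective ∧ ∀ p, g (φ p) = c := by
  have hΛ₀ : ℵ₀ ≤ #Λ := hΛ ▸ hν.trans (Order.le_succ ν)
  obtain ⟨c, hc⟩ := infinite_pigeonhole g hΛ₀ <| by
    rw [hΛ, (isRegular_succ hν).cof_ord]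
    exact Order.lt_succ_of_le hC
  have hcard : #(Λ × Fin n) = #(g ⁻¹' {c}) := by
    rw [hc, mk_prod, lift_uzero, mk_fin, lift_natCast]
    exact mul_eq_left hΛ₀ (natCast_lt_aleph0.le.trans hΛ₀) (by simpa using hn)
  obtain ⟨e⟩ := Cardinal.eq.1 hcard
  exact ⟨c, fun p ↦ e p, Subtype.val_injective.comp e.injective, fun p ↦ (e p).2⟩

theorem mk_arrow_complex_le {κ : Cardinal.{u}} (hκ : ℵ₀ ≤ κ) {ι : Type u} (hι : #ι ≤ κ) :
    #(ι → ℂ) ≤ 2 ^ κ := calc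
  #(ι → ℂ) = 2 ^ (ℵ₀ * #ι) := by
    rw [mk_arrow, mk_complex, lift_continuum, lift_uzero, ← two_power_aleph0, ← power_mul]
  _ ≤ 2 ^ κ :=
    power_le_power_left two_ne_zero ((mul_le_mul' le_rfl hι).trans (aleph0_mul_eq hκ).le)

end Pigeonhole

section CommonZeroSubspaces

variable {X : Type u} [NormedAddCommGroup X] [NormedSpace ℂ X]

theorem HasCommonZeros.exists_submodule {κ : Cardinal.{u}} (hκ : ℵ₀ ≤ κ) {m : ℕ} (hm : 1 ≤ m)
    (hZ : HasCommonZeros ℂ X (2 ^ κ) m) {F : Set (X → ℂ)}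
    (hF : F ⊆ homogeneousPolynomials ℂ X (m + 1)) (hFκ : #F ≤ κ) :
    ∃ Y : Submodule ℂ X, (∀ P ∈ F, ∀ y ∈ Y, P y = 0) ∧ 2 ^ κ < densityChar Y := by
  have hκ' : κ ≤ 2 ^ κ := (cantor κ).le
  have hν : ℵ₀ ≤ 2 ^ κ := hκ.trans hκ'
  choose d hd₁ hd A hA using fun P : F ↦ hF P.2
  obtain ⟨Λ, x, hΛ, hx, hAx⟩ := hZ.exists_diagonal_family hν hm (hFκ.trans hκ') hd A
  obtain ⟨c, φ, hφ, hc⟩ := exists_injective_prod_fin_const hν hΛ (mk_arrow_complex_le hκ hFκ)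
    (fun i P ↦ A P fun _ ↦ x i) (Nat.succ_ne_zero (m + 1))
  have hω := Complex.isPrimitiveRoot_exp (m + 2) (Nat.succ_ne_zero _)
  let y := powerWeightedSum (Complex.exp (2 * Real.pi * Complex.I / (m + 2 : ℕ))) (x ∘ φ)
  refine ⟨Submodule.span ℂ (range y), fun P hP v hv ↦ ?_, ?_⟩
  · refine (congrFun (hA ⟨P, hP⟩) v).trans ?_
    exact ((hAx ⟨P, hP⟩).comp_injective hφ).apply_eq_zero_of_mem_span hω
      (Nat.one_le_iff_ne_zero.1 (hd₁ _)) (Nat.lt_succ_of_le (hd _))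
      (fun p ↦ congrFun (hc p) ⟨P, hP⟩) hv
  · rw [← Order.succ_le_iff, ← hΛ]
    exact mk_le_densityChar_of_pairwise_le_dist
      (y := fun t ↦ (⟨y t, Submodule.subset_span (mem_range_self t)⟩ : Submodule.span ℂ (range y)))
      one_pos ((hx.comp_injective hφ).pairwise_one_le_dist (Nat.succ_ne_zero _)
        (hω.norm'_eq_one (Nat.succ_ne_zero _)))

theorem hasCommonZeros_of_iterate_lt_densityChar (k : ℕ) {κ : Cardinal.{u}} (hκ : ℵ₀ ≤ κ)
    (hX : (2 ^ ·)^[k] κ < densityChar (WeakDual ℂ X)) : HasCommonZeros ℂ X κ (k + 1) := by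
  induction k generalizing κ with
  | zero => exact hasCommonZeros_one hκ hX
  | succ k ih =>
    intro F hF hFκ
    have hκ' : ℵ₀ ≤ 2 ^ κ := hκ.trans (cantor κ).le
    obtain ⟨Y, hFY, hY⟩ := (ih hκ' hX).exists_submodule hκ (Nat.le_add_left 1 k) hF hFκ
    have := nontrivial_of_one_lt_densityChar ((one_lt_aleph0.trans_le hκ').trans hY)
    obtain ⟨y, hy⟩ := exists_ne (0 : Y)
    exact ⟨y, Subtype.coe_ne_coe.2 hy, fun P hP ↦ hFY P hP y y.2⟩

theorem exists_common_zero_subspace_of_large_weak_star_density_general {κ : Cardinal.{u}}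
    (hκ : ℵ₀ ≤ κ) (k : ℕ) (hX : (2 ^ ·)^[k] κ < densityChar (WeakDual ℂ X)) {F : Set (X → ℂ)}
    (hF : F ⊆ homogeneousPolynomials ℂ X (k + 1)) (hFκ : #F ≤ κ) :
    (∃ Y : Submodule ℂ X, (∀ P ∈ F, ∀ y ∈ Y, P y = 0) ∧ κ < densityChar Y) ∧
      (1 ≤ k → ∃ Y : Submodule ℂ X, (∀ P ∈ F, ∀ y ∈ Y, P y = 0) ∧ 2 ^ κ < densityChar Y) := by
  cases k with
  | zero =>
    exact ⟨(hasCommonZeros_one hκ hX).exists_submodule_of_subset_one hκ hF hFκ,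
      fun h ↦ absurd h (Nat.not_succ_le_zero 0)⟩
  | succ k =>
    have hZ := hasCommonZeros_of_iterate_lt_densityChar k (hκ.trans (cantor κ).le) hX
    obtain ⟨Y, hFY, hY⟩ := hZ.exists_submodule hκ (Nat.le_add_left 1 k) hF hFκ
    exact ⟨⟨Y, hFY, (cantor κ).trans hY⟩, fun _ ↦ ⟨Y, hFY, hY⟩⟩

end CommonZeroSubspaces

theorem iterate_two_power_beth (n k : ℕ) :
    (2 ^ ·)^[k] (beth.{u} n) = beth ((n + k : ℕ) : Ordinal) := by
  induction k with
  | zero => rfl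
  | succ k ih =>
    rw [Function.iterate_succ_apply', ih, ← beth_succ]
    norm_cast

/-- Let `n, m` be natural numbers with `m ≥ 1` and let `X` be a complex Banach space whose
dual `X*`, with the weak-star topology, has density character `> ℶ_{n+m-1}`. Then every
family of at most `ℶ_n` continuous homogeneous polynomials on `X` (given by continuous
symmetric multilinear forms) of degrees between `1` and `m` has a common zero subspace of
density at least `ℶ_n⁺`; moreover, if `m ≥ 2`, it has a common zero subspace of density at
least `ℶ_{n+1}⁺`. -/
theorem exists_common_zero_subspace_of_large_weak_star_density
    {X : Type u} [NormedAddCommGroup X] [NormedSpace ℂ X] [CompleteSpace X]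
    (n m : ℕ) (hm : 1 ≤ m)
    (hX : Cardinal.beth (↑(n + m - 1) : Ordinal) < densityChar (WeakDual ℂ X))
    (ι : Type u) (hι : Cardinal.mk ι ≤ Cardinal.beth (↑n : Ordinal))
    (d : ι → ℕ) (hd : ∀ i, 1 ≤ d i ∧ d i ≤ m)
    (A : ∀ i, ContinuousMultilinearMap ℂ (fun _ : Fin (d i) => X) ℂ)
    (hsymm : ∀ i (x : Fin (d i) → X) (σ : Equiv.Perm (Fin (d i))), A i (x ∘ σ) = A i x) :
    (∃ Y : Submodule ℂ X,
      (∀ i, ∀ y ∈ Y, A i (fun _ => y) = 0) ∧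
      Order.succ (Cardinal.beth (↑n : Ordinal)) ≤ densityChar ↥Y) ∧
    (2 ≤ m → ∃ Y : Submodule ℂ X,
      (∀ i, ∀ y ∈ Y, A i (fun _ => y) = 0) ∧
      Order.succ (Cardinal.beth (↑(n + 1) : Ordinal)) ≤ densityChar ↥Y) := by
  obtain ⟨k, rfl⟩ := Nat.exists_eq_add_of_le' hm
  have hF : range (fun i x ↦ A i fun _ ↦ x) ⊆ homogeneousPolynomials ℂ X (k + 1) :=
    range_subset_iff.2 fun i ↦ ⟨d i, (hd i).1, (hd i).2, A i, rfl⟩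
  have hbeth : beth ((n + 1 : ℕ) : Ordinal) = 2 ^ beth.{u} n := (iterate_two_power_beth n 1).symm
  obtain ⟨hsmall, hlarge⟩ := exists_common_zero_subspace_of_large_weak_star_density_general
    (aleph0_le_beth _) k ((iterate_two_power_beth n k).trans_lt hX) hF (mk_range_le.trans hι)
  simp only [forall_mem_range] at hsmall hlarge
  simp only [Order.succ_le_iff, hbeth]
  exact ⟨hsmall, fun hk ↦ hlarge (Nat.le_of_succ_le_succ hk)⟩

end
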